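/- Let d ≥ 1, let H_B and H_{R₂} be finite-dimensional complex Hilbert spaces, and let ψ ∈ ℂ^d_A ⊗ H_B ⊗ (ℂ^d_{R₁} ⊗ H_{R₂}) be a unit vector of the form ψ = ∑_{z=0}^{d−1} √p_z |z⟩_A ⊗ Ψ_z, where p is a probability distribution on {0,…,d−1} and Ψ_z ∈ H_B ⊗ ℂ^d_{R₁} ⊗ H_{R₂} is the image of |φ_z⟩ ⊗ |z⟩ under the canonical isomorphism (H_B ⊗ H_{R₂}) ⊗ ℂ^d_{R₁} ≅ H_B ⊗ ℂ^d_{R₁} ⊗ H_{R₂}, for unit vectors |φ_z⟩ ∈ H_B ⊗ H_{R₂} (this expresses the condition H(Z^A|R) = 0, with R = R₁R₂). If p_secure(X^A|R) ≤ ε for some ε ≥ 0 (with R = ℂ^d_{R₁} ⊗ H_{R₂}), then there exists a POVM (Λ_z)_{z=0}^{d−1} on H_B with guessing probability ∑_z ⟨ψ| (|z⟩⟨z| ⊗ Λ_z ⊗ 1_R) |ψ⟩ ≥ 1 − √(2ε). -/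

import Mathlib

open Matrix BigOperators Finset
open scoped Classical ComplexOrder

noncomputable section

/-- The positive semidefinite square root of a matrix (zero if the matrix is not PSD). -/
def psdSqrt {ι : Type*} [Fintype ι] [DecidableEq ι] (M : Matrix ι ι ℂ) : Matrix ι ι ℂ :=
  if h : M.PosSemidef then
    (h.1.eigenvectorUnitary : Matrix ι ι ℂ) *
      Matrix.diagonal (fun i => (Real.sqrt (h.1.eigenvalues i) : ℂ)) *
      (star h.1.eigenvectorUnitary : Matrix ι ι ℂ)
  else 0

/-- Trace norm ‖M‖₁ = Tr √(M†M). -/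
def traceNorm {ι : Type*} [Fintype ι] [DecidableEq ι] (M : Matrix ι ι ℂ) : ℝ :=
  ((psdSqrt (Mᴴ * M)).trace).re

/-- Trace distance D(ρ,σ) = ‖ρ−σ‖₁/2. -/
def traceDist {ι : Type*} [Fintype ι] [DecidableEq ι] (ρ σ : Matrix ι ι ℂ) : ℝ :=
  traceNorm (ρ - σ) / 2

/-- Fidelity F(ρ,σ) = ‖√ρ√σ‖₁. -/
def fidelity {ι : Type*} [Fintype ι] [DecidableEq ι] (ρ σ : Matrix ι ι ℂ) : ℝ :=
  traceNorm (psdSqrt ρ * psdSqrt σ)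

/-- ω = exp(2πi/d). -/
def omega (d : ℕ) : ℂ := Complex.exp (2 * Real.pi * Complex.I / d)

/-- Conjugate (X) basis vector |x̃⟩ of ℂ^d, component at z: ω^{−xz}/√d. -/
def xVec (d : ℕ) (x z : Fin d) : ℂ :=
  (starRingEnd ℂ) (omega d ^ (x.val * z.val)) / (Real.sqrt d : ℂ)

/-- Component of (⟨x̃|⊗1_{BR})|ψ⟩. -/
def condVecX {d : ℕ} {β r : Type*} [Fintype β] [Fintype r]
    (ψ : Fin d × β × r → ℂ) (x : Fin d) (p : β × r) : ℂ :=
  ∑ z, (starRingEnd ℂ) (xVec d x z) * ψ (z, p.1, p.2)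

/-- Unnormalized conditional state ϑ_x^R = Tr_B[(⟨x̃|⊗1)|ψ⟩⟨ψ|(|x̃⟩⊗1)]. -/
def thetaR {d : ℕ} {β r : Type*} [Fintype β] [Fintype r]
    (ψ : Fin d × β × r → ℂ) (x : Fin d) : Matrix r r ℂ :=
  Matrix.of fun s s' => ∑ b, condVecX ψ x (b, s) * (starRingEnd ℂ) (condVecX ψ x (b, s'))

/-- X-measured cq marginal ψ̄_X^{AR} = ∑_x |x̃⟩⟨x̃| ⊗ ϑ_x^R. -/
def cqMarginalX {d : ℕ} {β r : Type*} [Fintype β] [Fintype r]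
    (ψ : Fin d × β × r → ℂ) : Matrix (Fin d × r) (Fin d × r) ℂ :=
  Matrix.of fun p q =>
    ∑ x, xVec d x p.1 * (starRingEnd ℂ) (xVec d x q.1) * thetaR ψ x p.2 q.2

/-- Reduced state ψ^R = Tr_{AB}|ψ⟩⟨ψ|. -/
def reducedR {α β r : Type*} [Fintype α] [Fintype β] [Fintype r]
    (ψ : α × β × r → ℂ) : Matrix r r ℂ :=
  Matrix.of fun s s' => ∑ z, ∑ b, ψ (z, b, s) * (starRingEnd ℂ) (ψ (z, b, s'))

/-- The ideal key state (1/d) 1_A ⊗ ψ^R. -/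
def idealKey {d : ℕ} {β r : Type*} [Fintype β] [Fintype r]
    (ψ : Fin d × β × r → ℂ) : Matrix (Fin d × r) (Fin d × r) ℂ :=
  Matrix.of fun p q => (if p.1 = q.1 then ((d : ℂ))⁻¹ else 0) * reducedR ψ p.2 q.2

/-- Security parameter p_secure(X^A|R) = D(ψ̄_X^{AR}, (1/d)1⊗ψ^R). -/
def pSecure {d : ℕ} {β r : Type*} [Fintype β] [DecidableEq β] [Fintype r] [DecidableEq r]
    (ψ : Fin d × β × r → ℂ) : ℝ :=
  traceDist (cqMarginalX ψ) (idealKey ψ)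

/-- Guessing probability ∑_z ⟨ψ|(|z⟩⟨z| ⊗ Λ_z ⊗ 1_R)|ψ⟩. -/
def pGuess {d : ℕ} {β r : Type*} [Fintype β] [Fintype r]
    (ψ : Fin d × β × r → ℂ) (Λ : Fin d → Matrix β β ℂ) : ℝ :=
  (∑ z, ∑ b, ∑ b', ∑ s, (starRingEnd ℂ) (ψ (z, b, s)) * Λ z b b' * ψ (z, b', s)).re

end

/-!
Write `M` for the amplitude matrix of `ψ` between `R` and `B`, and `T = M * Mᴴ`. Since `R`
determines the `Z`-value of `A`, the reduced state of `R` is the pinching of `T`, which removes the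
coherences between different values; a controlled shift on `A` turns the `X`-measured state into
`(1/d) 1 ⊗ T`. Hence `2 p_secure` is the trace norm of `T - pinching T`. By the Powers–Størmer
inequality `√T` is then close in Hilbert–Schmidt norm to the square root of the pinched state, which
is itself pinched, so that the squared Hilbert–Schmidt norm of the pinching of `√T` is at least
`Tr T - 2 p_secure`. The square-root (pretty good) measurement succeeds at least with this
probability. Its effects have to be transposed, because `M` acts on the conjugate space of `B`.
-/

section TraceNorm

open scoped MatrixOrder Kronecker

variable {m n : Type*} [Fintype m] [Fintype n]

theorem re_trace_mul_nonneg {A B : Matrix n n ℂ} (hA : 0 ≤ A) (hB : 0 ≤ B) :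
    0 ≤ (A * B).trace.re := by
  have hsqrt : (CFC.sqrt A)ᴴ = CFC.sqrt A := (CFC.sqrt_nonneg A).isSelfAdjoint
  have h := ((nonneg_iff_posSemidef.1 hB).mul_mul_conjTranspose_same (CFC.sqrt A)).trace_nonneg
  rw [hsqrt, trace_mul_cycle, CFC.sqrt_mul_sqrt_self A] at h
  exact (Complex.le_def.1 h).1

theorem re_trace_mul_le_of_le {A B C : Matrix n n ℂ} (hAB : A ≤ B) (hC : 0 ≤ C) :
    (A * C).trace.re ≤ (B * C).trace.re := by
  have h := re_trace_mul_nonneg (sub_nonneg.2 hAB) hC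
  rwa [Matrix.sub_mul, trace_sub, Complex.sub_re, sub_nonneg] at h

theorem le_abs_of_isSelfAdjoint {X : Matrix n n ℂ} (hX : IsSelfAdjoint X) : X ≤ CFC.abs X := by
  rw [← sub_nonneg, CFC.abs_sub_self X]
  exact nsmul_nonneg (CFC.negPart_nonneg X) 2

theorem neg_le_abs_of_isSelfAdjoint {X : Matrix n n ℂ} (hX : IsSelfAdjoint X) :
    -X ≤ CFC.abs X := by
  simpa only [CFC.abs_neg] using le_abs_of_isSelfAdjoint hX.neg

theorem exists_pseudoinverse {A : Matrix n n ℂ} (hA : IsSelfAdjoint A) :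
    ∃ G : Matrix n n ℂ, IsSelfAdjoint G ∧ Commute A G ∧ A * G * A = A ∧ G * A * G = G := by
  have hcont (g : ℝ → ℝ) : ContinuousOn g (spectrum ℝ A) := finite_real_spectrum.continuousOn g
  have hid : cfc (fun x : ℝ => x) A = A := cfc_id' ℝ A
  have hmul (g h : ℝ → ℝ) : cfc g A * cfc h A = cfc (fun x => g x * h x) A :=
    (cfc_mul g h A (hcont g) (hcont h)).symm
  have hcomm := cfc_commute_cfc (fun x : ℝ => x) (fun x => x⁻¹) A
  refine ⟨cfc (fun x : ℝ => x⁻¹) A, cfc_predicate _ A, ?_, ?_, ?_⟩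
  · rwa [hid] at hcomm
  · nth_rw 4 [← hid]
    nth_rw 1 3 [← hid]
    simp only [hmul, mul_inv_mul_cancel]
  · nth_rw 2 [← hid]
    simp only [hmul]
    exact congrArg (cfc · A) (funext fun x => by simpa only [inv_inv] using mul_inv_mul_cancel x⁻¹)

theorem exists_polar_decomposition {β : Type*} [Fintype β] [DecidableEq β] (M : Matrix n β ℂ) :
    ∃ W : Matrix n β ℂ, M * Wᴴ = CFC.sqrt (M * Mᴴ) ∧ Wᴴ * W ≤ 1 := by
  set A := CFC.sqrt (M * Mᴴ)
  have hAA : A * A = M * Mᴴ :=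
    CFC.sqrt_mul_sqrt_self _ (posSemidef_self_mul_conjTranspose M).nonneg
  obtain ⟨G, hG, hAG, hAGA, hGAG⟩ := exists_pseudoinverse (CFC.sqrt_nonneg (M * Mᴴ)).isSelfAdjoint
  have hWt : (G * M)ᴴ = Mᴴ * G := by rw [conjTranspose_mul, ← star_eq_conjTranspose G, hG.star_eq]
  have hWW : (G * M) * (G * M)ᴴ = G * A := by
    calc (G * M) * (G * M)ᴴ = G * (M * Mᴴ) * G := by rw [hWt]; simp only [Matrix.mul_assoc]
      _ = G * (A * (A * G)) := by rw [← hAA]; simp only [Matrix.mul_assoc]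
      _ = G * A := by rw [hAG.eq, ← Matrix.mul_assoc A, hAGA]
  have hproj : IsStarProjection ((G * M)ᴴ * (G * M)) := by
    refine ⟨?_, (posSemidef_conjTranspose_mul_self _).1⟩
    calc (G * M)ᴴ * (G * M) * ((G * M)ᴴ * (G * M))
        = (G * M)ᴴ * ((G * M) * (G * M)ᴴ * (G * M)) := by simp only [Matrix.mul_assoc]
      _ = (G * M)ᴴ * (G * M) := by rw [hWW, ← Matrix.mul_assoc (G * A), hGAG]
  refine ⟨G * M, ?_, sub_nonneg.1 hproj.one_sub.nonneg⟩
  rw [hWt, ← Matrix.mul_assoc, ← hAA, Matrix.mul_assoc, hAG.eq, ← Matrix.mul_assoc, hAGA]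

variable [DecidableEq m] [DecidableEq n]

theorem psdSqrt_eq_sqrt (M : Matrix n n ℂ) : psdSqrt M = CFC.sqrt M := by
  by_cases h : M.PosSemidef
  · rw [psdSqrt, dif_pos h, CFC.sqrt_eq_real_sqrt M h.nonneg, cfcₙ_eq_cfc, h.1.cfc_eq]
    rfl
  · rw [psdSqrt, dif_neg h, CFC.sqrt_of_not_nonneg (mt nonneg_iff_posSemidef.1 h)]

theorem coe_traceNorm (X : Matrix n n ℂ) : (traceNorm X : ℂ) = (CFC.abs X).trace := by
  have h := (nonneg_iff_posSemidef.1 (CFC.abs_nonneg X)).trace_nonneg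
  rw [traceNorm, psdSqrt_eq_sqrt]
  exact (Complex.eq_re_of_ofReal_le h).symm

theorem traceNorm_eq_re_trace_abs (X : Matrix n n ℂ) : traceNorm X = (CFC.abs X).trace.re := by
  rw [← coe_traceNorm, Complex.ofReal_re]

theorem coe_traceNorm_of_nonneg {A : Matrix n n ℂ} (hA : 0 ≤ A) : (traceNorm A : ℂ) = A.trace := by
  rw [coe_traceNorm, CFC.abs_of_nonneg A]

theorem traceNorm_kronecker (X : Matrix m m ℂ) (Y : Matrix n n ℂ) :
    traceNorm (X ⊗ₖ Y) = traceNorm X * traceNorm Y := by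
  have habs : CFC.abs (X ⊗ₖ Y) = CFC.abs X ⊗ₖ CFC.abs Y := by
    refine CFC.sqrt_unique ?_ ((nonneg_iff_posSemidef.1 (CFC.abs_nonneg X)).kronecker
      (nonneg_iff_posSemidef.1 (CFC.abs_nonneg Y))).nonneg
    simp only [← mul_kronecker_mul, CFC.abs_mul_abs, star_eq_conjTranspose,
      conjTranspose_kronecker]
  have h : (traceNorm (X ⊗ₖ Y) : ℂ) = traceNorm X * traceNorm Y := by
    simp only [coe_traceNorm, habs, trace_kronecker]
  exact_mod_cast h

theorem traceNorm_submatrix_equiv (e : m ≃ n) (X : Matrix n n ℂ) :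
    traceNorm (X.submatrix e e) = traceNorm X := by
  have habs : CFC.abs (X.submatrix e e) = (CFC.abs X).submatrix e e := by
    refine CFC.sqrt_unique ?_ ((nonneg_iff_posSemidef.1 (CFC.abs_nonneg X)).submatrix e).nonneg
    rw [submatrix_mul_equiv, CFC.abs_mul_abs, star_eq_conjTranspose, star_eq_conjTranspose,
      conjTranspose_submatrix, submatrix_mul_equiv]
  rw [traceNorm_eq_re_trace_abs, traceNorm_eq_re_trace_abs, habs]
  exact congrArg Complex.re (e.sum_comp fun i => CFC.abs X i i)

theorem re_trace_mul_le_traceNorm {S X : Matrix n n ℂ} (hX : IsSelfAdjoint X) (hS : -1 ≤ S)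
    (hS' : S ≤ 1) : (S * X).trace.re ≤ traceNorm X := by
  have h₁ := re_trace_mul_nonneg (neg_le_iff_add_nonneg'.1 hS)
    (sub_nonneg.2 (le_abs_of_isSelfAdjoint hX))
  have h₂ := re_trace_mul_nonneg (sub_nonneg.2 hS')
    (neg_le_iff_add_nonneg.1 (neg_le_abs_of_isSelfAdjoint hX))
  simp only [Matrix.add_mul, Matrix.sub_mul, Matrix.mul_add, Matrix.mul_sub, Matrix.one_mul,
    trace_add, trace_sub, Complex.add_re, Complex.sub_re] at h₁ h₂
  rw [traceNorm_eq_re_trace_abs]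
  linarith

theorem exists_sign_mul_eq_abs {D : Matrix n n ℂ} (hD : IsSelfAdjoint D) :
    ∃ S : Matrix n n ℂ, -1 ≤ S ∧ S ≤ 1 ∧ S * D = CFC.abs D ∧ D * S = CFC.abs D := by
  have hcont (g : ℝ → ℝ) : ContinuousOn g (spectrum ℝ D) := finite_real_spectrum.continuousOn g
  set sgn : ℝ → ℝ := fun x => SignType.sign x
  have hmul : cfc sgn D * D = CFC.abs D := by
    nth_rw 2 [← cfc_id' ℝ D]
    rw [← cfc_mul sgn _ D (hcont _) (hcont _), CFC.abs_eq_cfc_norm D]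
    simp only [sgn, sign_mul_self, Real.norm_eq_abs]
  have hcomm : Commute (cfc sgn D) D := by
    have h := cfc_commute_cfc sgn (fun x => x) D
    rwa [cfc_id' ℝ D] at h
  refine ⟨cfc sgn D, ?_, cfc_le_one _ D fun x _ => ?_, hmul, ?_⟩
  · have h : cfc (fun _ => -1 : ℝ → ℝ) D = -1 := by rw [cfc_const _ D, map_neg, map_one]
    rw [← h]
    refine cfc_mono (fun x _ => ?_) (hcont _) (hcont _)
    rcases SignType.trichotomy (SignType.sign x) with h | h | h <;> simp [sgn, h]
  · rcases SignType.trichotomy (SignType.sign x) with h | h | h <;> simp [sgn, h]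
  · rw [← hcomm.eq, hmul]

theorem powers_stormer {A C : Matrix n n ℂ} (hA : 0 ≤ A) (hC : 0 ≤ C) :
    ((A - C) * (A - C)).trace.re ≤ traceNorm (A * A - C * C) := by
  have hD : IsSelfAdjoint (A - C) := hA.isSelfAdjoint.sub hC.isSelfAdjoint
  have hX : IsSelfAdjoint (A * A - C * C) := by
    simpa only [sq] using (hA.isSelfAdjoint.pow 2).sub (hC.isSelfAdjoint.pow 2)
  obtain ⟨S, hS, hS', hSD, hDS⟩ := exists_sign_mul_eq_abs hD
  calc ((A - C) * (A - C)).trace.re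
      = ((A - C) * A).trace.re + (-(A - C) * C).trace.re := by
        rw [← Complex.add_re, ← trace_add]
        congr 2
        noncomm_ring
    _ ≤ (CFC.abs (A - C) * A).trace.re + (CFC.abs (A - C) * C).trace.re :=
        add_le_add (re_trace_mul_le_of_le (le_abs_of_isSelfAdjoint hD) hA)
          (re_trace_mul_le_of_le (neg_le_abs_of_isSelfAdjoint hD) hC)
    _ = (S * (A - C) * A).trace.re + (S * (C * (A - C))).trace.re := by
        rw [hSD, ← Matrix.mul_assoc S, trace_mul_cycle S, hDS]
    _ = (S * (A * A - C * C)).trace.re := by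
        rw [← Complex.add_re, ← trace_add]
        congr 2
        noncomm_ring
    _ ≤ traceNorm (A * A - C * C) := re_trace_mul_le_traceNorm hX hS hS'

end TraceNorm

/-- Positive operator-valued measure with outcomes in `κ`, given by its effects. -/
structure IsPOVM {κ β : Type*} [Fintype κ] [Fintype β] [DecidableEq β]
    (Λ : κ → Matrix β β ℂ) : Prop where
  posSemidef : ∀ z, (Λ z).PosSemidef
  sum_eq_one : ∑ z, Λ z = 1

theorem IsPOVM.transpose {κ β : Type*} [Fintype κ] [Fintype β] [DecidableEq β]
    {Λ : κ → Matrix β β ℂ} (hΛ : IsPOVM Λ) : IsPOVM fun z => (Λ z)ᵀ where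
  posSemidef z := (hΛ.posSemidef z).transpose
  sum_eq_one := by rw [← transpose_sum, hΛ.sum_eq_one, transpose_one]

section Pinching

open scoped MatrixOrder

variable {ι κ : Type*} [DecidableEq ι] [DecidableEq κ]

/-- The projection onto the span of the basis vectors labelled `z` by `f`. -/
def blockProj (f : ι → κ) (z : κ) : Matrix ι ι ℂ :=
  diagonal fun i => if f i = z then 1 else 0

theorem isHermitian_blockProj (f : ι → κ) (z : κ) : (blockProj f z).IsHermitian := by
  refine isHermitian_diagonal_of_self_adjoint _ (funext fun i => ?_)
  simp only [Pi.star_apply, apply_ite star, star_one, star_zero]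

theorem blockProj_nonneg (f : ι → κ) (z : κ) : 0 ≤ blockProj f z := by
  refine (PosSemidef.diagonal fun i => ?_).nonneg
  dsimp only
  split_ifs
  exacts [zero_le_one, le_rfl]

theorem sum_blockProj [Fintype κ] (f : ι → κ) : ∑ z, blockProj f z = 1 := by
  ext i j
  simp only [blockProj, Matrix.sum_apply, diagonal_apply, one_apply]
  split_ifs <;> simp

variable [Fintype ι]

theorem trace_blockProj_mul (f : ι → κ) (z : κ) (X : Matrix ι ι ℂ) :
    (blockProj f z * X).trace = ∑ i, if f i = z then X i i else 0 := by
  simp only [trace, diag_apply, blockProj, diagonal_mul, ite_mul, one_mul, zero_mul]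

theorem blockProj_mul_self (f : ι → κ) (z : κ) : blockProj f z * blockProj f z = blockProj f z := by
  simp only [blockProj, diagonal_mul_diagonal, mul_ite, mul_one, mul_zero, ← ite_and,
    and_self]

variable [Fintype κ]

/-- The pinching (dephasing) map of the block decomposition given by the fibres of `f`; it
discards the off-diagonal blocks of `T`. -/
def pinching (f : ι → κ) (T : Matrix ι ι ℂ) : Matrix ι ι ℂ :=
  ∑ z, blockProj f z * T * blockProj f z

theorem pinching_apply (f : ι → κ) (T : Matrix ι ι ℂ) (i j : ι) :
    pinching f T i j = if f i = f j then T i j else 0 := by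
  simp [pinching, blockProj, Matrix.sum_apply, mul_diagonal, diagonal_mul, eq_comm]

theorem pinching_nonneg (f : ι → κ) {T : Matrix ι ι ℂ} (hT : 0 ≤ T) : 0 ≤ pinching f T :=
  Finset.sum_nonneg fun z _ =>
    IsSelfAdjoint.conjugate_nonneg hT (isHermitian_blockProj f z)

theorem pinching_pinching (f : ι → κ) (T : Matrix ι ι ℂ) :
    pinching f (pinching f T) = pinching f T := by
  ext i j
  simp only [pinching_apply, ← ite_and, and_self]

theorem trace_pinching (f : ι → κ) (T : Matrix ι ι ℂ) : (pinching f T).trace = T.trace := by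
  simp only [trace, diag_apply, pinching_apply, if_true]

theorem trace_pinching_mul (f : ι → κ) (A B : Matrix ι ι ℂ) :
    (pinching f A * B).trace = (A * pinching f B).trace := by
  simp only [pinching, Matrix.sum_mul, Matrix.mul_sum, trace_sum]
  refine Finset.sum_congr rfl fun z _ => ?_
  rw [Matrix.mul_assoc, Matrix.mul_assoc, trace_mul_comm]
  simp only [Matrix.mul_assoc]

theorem commute_blockProj_pinching (f : ι → κ) (z : κ) (T : Matrix ι ι ℂ) :
    Commute (blockProj f z) (pinching f T) := by
  ext i j
  simp only [blockProj, diagonal_mul, mul_diagonal, pinching_apply]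
  by_cases h : f i = f j
  · simp only [h, mul_comm]
  · simp only [if_neg h, mul_zero, zero_mul]

theorem pinching_eq_self_of_commute {f : ι → κ} {T : Matrix ι ι ℂ}
    (hT : ∀ z, Commute (blockProj f z) T) : pinching f T = T := by
  simp only [pinching, (hT _).eq, Matrix.mul_assoc, blockProj_mul_self]
  rw [← Matrix.mul_sum, sum_blockProj, Matrix.mul_one]

theorem pinching_sqrt_pinching (f : ι → κ) (T : Matrix ι ι ℂ) :
    pinching f (CFC.sqrt (pinching f T)) = CFC.sqrt (pinching f T) :=
  pinching_eq_self_of_commute fun z => ((commute_blockProj_pinching f z T).symm.cfcₙ_nnreal _).symm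

theorem re_trace_sub_traceNorm_sub_pinching_le (f : ι → κ) {T : Matrix ι ι ℂ} (hT : 0 ≤ T) :
    T.trace.re - traceNorm (T - pinching f T) ≤
      (pinching f (CFC.sqrt T) * pinching f (CFC.sqrt T)).trace.re := by
  set A := CFC.sqrt T
  set C := CFC.sqrt (pinching f T)
  have hAA : A * A = T := CFC.sqrt_mul_sqrt_self T
  have hCC : C * C = pinching f T := CFC.sqrt_mul_sqrt_self _ (pinching_nonneg f hT)
  have hA : 0 ≤ A := CFC.sqrt_nonneg T
  have hC : 0 ≤ C := CFC.sqrt_nonneg _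
  have htrace : (C * C).trace.re = T.trace.re := by rw [hCC, trace_pinching]
  have hcross : (A * C).trace = (pinching f A * C).trace := by
    rw [trace_pinching_mul, pinching_sqrt_pinching]
  have hexpand (X : Matrix ι ι ℂ) : ((X - C) * (X - C)).trace.re =
      (X * X).trace.re - 2 * (X * C).trace.re + (C * C).trace.re := by
    simp only [Matrix.sub_mul, Matrix.mul_sub, trace_sub, Complex.sub_re, trace_mul_comm C X]
    ring
  have hstormer := powers_stormer hA hC
  have hnonneg : 0 ≤ ((pinching f A - C) * (pinching f A - C)).trace.re := by
    have h : IsSelfAdjoint (pinching f A - C) :=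
      (pinching_nonneg f hA).isSelfAdjoint.sub hC.isSelfAdjoint
    have := (nonneg_iff_posSemidef.1 h.mul_self_nonneg).trace_nonneg
    exact (Complex.le_def.1 this).1
  rw [hexpand, hAA, hCC, ← hCC, htrace, hcross] at hstormer
  rw [hexpand, htrace] at hnonneg
  rw [← hCC]
  linarith

variable {β : Type*} [Fintype β] [DecidableEq β]

-- The effects are the pullbacks of the block projections along the polar factor `W` of `M`; the
-- defect `1 - Wᴴ * W` is added to an arbitrary one of them.
theorem exists_isPOVM_pinching_sqrt_le [Nonempty κ] (f : ι → κ) (M : Matrix ι β ℂ) :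
    ∃ Λ : κ → Matrix β β ℂ, IsPOVM Λ ∧
      (pinching f (CFC.sqrt (M * Mᴴ)) * pinching f (CFC.sqrt (M * Mᴴ))).trace.re ≤
        ∑ z, (blockProj f z * (M * Λ z * Mᴴ)).trace.re := by
  obtain ⟨W, hMW, hW⟩ := exists_polar_decomposition M
  set A := CFC.sqrt (M * Mᴴ)
  have hWM : W * Mᴴ = A := by
    have hA : Aᴴ = A := (CFC.sqrt_nonneg (M * Mᴴ)).isSelfAdjoint
    rw [← hA, ← hMW, conjTranspose_mul, conjTranspose_conjTranspose]
  set Q : κ → Matrix β β ℂ := Pi.single (Classical.arbitrary κ) (1 - Wᴴ * W) with hQ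
  have hQpos (z : κ) : (Q z).PosSemidef := by
    rw [hQ, Pi.single_apply]
    split_ifs
    exacts [nonneg_iff_posSemidef.1 (sub_nonneg.2 hW), PosSemidef.zero]
  refine ⟨fun z => Wᴴ * blockProj f z * W + Q z, ⟨fun z => ?_, ?_⟩, ?_⟩
  · exact ((nonneg_iff_posSemidef.1 (blockProj_nonneg f z)).conjTranspose_mul_mul_same W).add
      (hQpos z)
  · rw [Finset.sum_add_distrib, ← Matrix.sum_mul, ← Matrix.mul_sum, sum_blockProj, hQ,
      Fintype.sum_pi_single', Matrix.mul_one, add_sub_cancel]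
  calc (pinching f A * pinching f A).trace.re
      = ∑ z, (blockProj f z * (A * blockProj f z * A)).trace.re := by
        rw [trace_pinching_mul, pinching_pinching, ← trace_pinching_mul, pinching, Matrix.sum_mul,
          trace_sum, Complex.re_sum]
        simp only [Matrix.mul_assoc]
    _ ≤ ∑ z, (blockProj f z * (M * (Wᴴ * blockProj f z * W + Q z) * Mᴴ)).trace.re := by
        refine Finset.sum_le_sum fun z _ => ?_
        have hsplit : M * (Wᴴ * blockProj f z * W + Q z) * Mᴴ =
            A * blockProj f z * A + M * Q z * Mᴴ := by
          nth_rw 1 [← hMW, ← hWM]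
          simp only [Matrix.mul_add, Matrix.add_mul, Matrix.mul_assoc]
        rw [hsplit, Matrix.mul_add, trace_add, Complex.add_re, le_add_iff_nonneg_right]
        exact re_trace_mul_nonneg (blockProj_nonneg f z)
          ((hQpos z).mul_mul_conjTranspose_same M).nonneg

end Pinching

section Fourier

theorem sqrt_mul_sqrt_natCast (d : ℕ) : (Real.sqrt d : ℂ) * (Real.sqrt d : ℂ) = d := by
  exact_mod_cast Real.mul_self_sqrt (Nat.cast_nonneg d)

theorem isPrimitiveRoot_omega (d : ℕ) [NeZero d] : IsPrimitiveRoot (omega d) d :=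
  Complex.isPrimitiveRoot_exp d (NeZero.ne d)

theorem conj_omega_mul_omega (d : ℕ) [NeZero d] : (starRingEnd ℂ) (omega d) * omega d = 1 := by
  rw [Complex.conj_mul', (isPrimitiveRoot_omega d).norm'_eq_one (NeZero.ne d), Complex.ofReal_one,
    one_pow]

variable {d : ℕ} [NeZero d]

theorem omega_pow_val_add (u v : Fin d) :
    omega d ^ (u + v).val = omega d ^ u.val * omega d ^ v.val := by
  rw [Fin.val_add, ← pow_eq_pow_mod _ (isPrimitiveRoot_omega d).pow_eq_one, pow_add]

theorem xVec_mul_conj_xVec (x a k : Fin d) :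
    xVec d x a * (starRingEnd ℂ) (xVec d x k) = xVec d x (a - k) / (Real.sqrt d : ℂ) := by
  obtain ⟨u, rfl⟩ : ∃ u, a = u + k := ⟨a - k, (sub_add_cancel a k).symm⟩
  have hunit : (starRingEnd ℂ) (omega d) ^ (x.val * k.val) * omega d ^ (x.val * k.val) = 1 := by
    rw [← mul_pow, conj_omega_mul_omega, one_pow]
  have hadd : omega d ^ (x.val * (u + k).val) =
      omega d ^ (x.val * u.val) * omega d ^ (x.val * k.val) := by
    simp only [pow_mul', omega_pow_val_add, mul_pow]
  simp only [xVec, hadd, add_sub_cancel_right, map_mul, map_div₀, map_pow, Complex.conj_conj,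
    Complex.conj_ofReal]
  linear_combination ((starRingEnd ℂ) (omega d) ^ (x.val * u.val) /
    ((Real.sqrt d : ℂ) * (Real.sqrt d : ℂ))) * hunit

theorem sum_xVec (u : Fin d) : ∑ x, xVec d x u = if u = 0 then (Real.sqrt d : ℂ) else 0 := by
  set η := (starRingEnd ℂ) (omega d ^ u.val)
  have hsum : ∑ x, xVec d x u = (∑ n ∈ Finset.range d, η ^ n) / (Real.sqrt d : ℂ) := by
    rw [← Fin.sum_univ_eq_sum_range (η ^ ·), Finset.sum_div]
    simp only [xVec, η, ← map_pow, pow_mul']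
  rw [hsum]
  split_ifs with hu
  · simp [η, hu, ← Complex.ofReal_natCast, ← Complex.ofReal_div, Real.div_sqrt]
  · have hη : η ≠ 1 := by
      rw [Ne, map_eq_one_iff _ (starRingEnd ℂ).injective,
        (isPrimitiveRoot_omega d).pow_eq_one_iff_dvd]
      exact fun h => hu (Fin.ext (Nat.eq_zero_of_dvd_of_lt h u.isLt))
    have hηd : η ^ d = 1 := by
      rw [← map_pow, pow_right_comm, (isPrimitiveRoot_omega d).pow_eq_one, one_pow, map_one]
    rw [geom_sum_eq hη, hηd, sub_self, zero_div, zero_div]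

theorem sum_xVec_mul_conj_xVec (u v : Fin d) :
    ∑ x, xVec d x u * (starRingEnd ℂ) (xVec d x v) = if u = v then 1 else 0 := by
  have hd : (Real.sqrt d : ℂ) ≠ 0 := by
    exact_mod_cast (Real.sqrt_pos.2 (Nat.cast_pos.2 (NeZero.pos d))).ne'
  simp only [xVec_mul_conj_xVec, ← Finset.sum_div, sum_xVec, sub_eq_zero, ite_div, div_self hd,
    zero_div]

end Fourier

section Security

open scoped MatrixOrder Kronecker

variable {d : ℕ} {β r : Type*}

/-- The controlled shift `|a⟩|s⟩ ↦ |a - f s⟩|s⟩`, as a permutation of basis labels. -/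
def controlledShift [NeZero d] (f : r → Fin d) : Fin d × r ≃ Fin d × r where
  toFun t := (t.1 - f t.2, t.2)
  invFun t := (t.1 + f t.2, t.2)
  left_inv t := by simp only [sub_add_cancel]
  right_inv t := by simp only [add_sub_cancel_right]

/-- The coefficients of `∑ s, |s⟩_R ⊗ ψ_s`, where `ψ_s` is the vector on `B` accompanying
`|f s⟩_A ⊗ |s⟩_R` in `ψ`. This determines `ψ` when `f` reads the value of `A` off `R`. -/
def ampMatrix (f : r → Fin d) (ψ : Fin d × β × r → ℂ) : Matrix r β ℂ :=
  Matrix.of fun s b => ψ (f s, b, s)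

variable {f : r → Fin d} {ψ : Fin d × β × r → ℂ}

theorem apply_eq_ite_ampMatrix (hψ : ∀ a b s, a ≠ f s → ψ (a, b, s) = 0) (a : Fin d) (b : β)
    (s : r) : ψ (a, b, s) = if a = f s then ampMatrix f ψ s b else 0 := by
  split_ifs with h
  · rw [h, ampMatrix, of_apply]
  · exact hψ a b s h

variable [Fintype β] [Fintype r]

theorem pGuess_nonneg {Λ : Fin d → Matrix β β ℂ} (hΛ : ∀ z, (Λ z).PosSemidef) :
    0 ≤ pGuess ψ Λ := by
  have hquad (z : Fin d) : ∑ s, star (fun b => ψ (z, b, s)) ⬝ᵥ Λ z *ᵥ (fun b => ψ (z, b, s)) =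
      ∑ b, ∑ b', ∑ s, (starRingEnd ℂ) (ψ (z, b, s)) * Λ z b b' * ψ (z, b', s) := by
    simp only [dotProduct, mulVec, Pi.star_apply, starRingEnd_apply, Finset.mul_sum, ← mul_assoc]
    exact Finset.sum_comm.trans (Finset.sum_congr rfl fun _ _ => Finset.sum_comm)
  refine (Complex.le_def.1 (Finset.sum_nonneg fun z _ => ?_)).1
  rw [← hquad]
  exact Finset.sum_nonneg fun s _ => (hΛ z).dotProduct_mulVec_nonneg _

theorem thetaR_apply (hψ : ∀ a b s, a ≠ f s → ψ (a, b, s) = 0) (x : Fin d) (s s' : r) :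
    thetaR ψ x s s' = (starRingEnd ℂ) (xVec d x (f s)) * xVec d x (f s') *
      (ampMatrix f ψ * (ampMatrix f ψ)ᴴ) s s' := by
  have hcond (b : β) (s : r) :
      condVecX ψ x (b, s) = (starRingEnd ℂ) (xVec d x (f s)) * ampMatrix f ψ s b := by
    simp only [condVecX, apply_eq_ite_ampMatrix hψ, mul_ite, mul_zero, Finset.sum_ite_eq',
      Finset.mem_univ, if_true]
  simp only [thetaR, of_apply, hcond, Matrix.mul_apply, Finset.mul_sum, map_mul,
    conjTranspose_apply, starRingEnd_apply, star_star]
  exact Finset.sum_congr rfl fun b _ => by ring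

theorem cqMarginalX_apply [NeZero d] (hψ : ∀ a b s, a ≠ f s → ψ (a, b, s) = 0)
    (a a' : Fin d) (s s' : r) :
    cqMarginalX ψ (a, s) (a', s') = (if a - f s = a' - f s' then (d : ℂ)⁻¹ else 0) *
      (ampMatrix f ψ * (ampMatrix f ψ)ᴴ) s s' := by
  set T := ampMatrix f ψ * (ampMatrix f ψ)ᴴ
  calc cqMarginalX ψ (a, s) (a', s')
      = ∑ x, (xVec d x a * (starRingEnd ℂ) (xVec d x (f s))) *
          (starRingEnd ℂ) (xVec d x a' * (starRingEnd ℂ) (xVec d x (f s'))) * T s s' := by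
        simp only [cqMarginalX, of_apply, thetaR_apply hψ, map_mul, Complex.conj_conj]
        exact Finset.sum_congr rfl fun x _ => by ring
    _ = (∑ x, xVec d x (a - f s) * (starRingEnd ℂ) (xVec d x (a' - f s'))) * (d : ℂ)⁻¹ *
          T s s' := by
        rw [Finset.sum_mul, Finset.sum_mul]
        refine Finset.sum_congr rfl fun x _ => ?_
        rw [xVec_mul_conj_xVec x a, xVec_mul_conj_xVec x a', map_div₀, Complex.conj_ofReal,
          div_mul_div_comm, sqrt_mul_sqrt_natCast, div_eq_mul_inv]
    _ = _ := by rw [sum_xVec_mul_conj_xVec, ite_mul, one_mul, zero_mul]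

theorem trace_ampMatrix_mul_conjTranspose (hψ : ∀ a b s, a ≠ f s → ψ (a, b, s) = 0) :
    (ampMatrix f ψ * (ampMatrix f ψ)ᴴ).trace.re = ∑ t, ‖ψ t‖ ^ 2 := by
  have hfiber (s : r) (b : β) : ‖ampMatrix f ψ s b‖ ^ 2 = ∑ a, ‖ψ (a, b, s)‖ ^ 2 := by
    simp only [apply_eq_ite_ampMatrix hψ, apply_ite norm, norm_zero, ite_pow,
      zero_pow two_ne_zero, Finset.sum_ite_eq', Finset.mem_univ, if_true]
  have hentry (w : ℂ) : (w * star w).re = ‖w‖ ^ 2 := by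
    rw [← starRingEnd_apply, Complex.mul_conj, Complex.ofReal_re, Complex.normSq_eq_norm_sq]
  simp only [trace, diag_apply, Matrix.mul_apply, conjTranspose_apply, Complex.re_sum, hentry,
    hfiber, Fintype.sum_prod_type]
  rw [Finset.sum_comm]
  exact (Finset.sum_congr rfl fun _ _ => Finset.sum_comm).trans Finset.sum_comm

variable [DecidableEq r]

theorem reducedR_eq_pinching (hψ : ∀ a b s, a ≠ f s → ψ (a, b, s) = 0) :
    reducedR ψ = pinching f (ampMatrix f ψ * (ampMatrix f ψ)ᴴ) := by
  ext s s'
  rw [pinching_apply, reducedR, of_apply,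
    Finset.sum_eq_single (f s) (fun a _ ha => by simp only [hψ a _ s ha, zero_mul,
      Finset.sum_const_zero]) (fun h => (h (Finset.mem_univ _)).elim)]
  simp only [apply_eq_ite_ampMatrix hψ, if_true, apply_ite (starRingEnd ℂ), map_zero, mul_ite,
    mul_zero, Matrix.mul_apply, conjTranspose_apply, starRingEnd_apply]
  split_ifs <;> simp

theorem cqMarginalX_sub_idealKey [NeZero d] (hψ : ∀ a b s, a ≠ f s → ψ (a, b, s) = 0) :
    cqMarginalX ψ - idealKey ψ =
      submatrix
        (((d : ℂ)⁻¹ • (1 : Matrix (Fin d) (Fin d) ℂ)) ⊗ₖ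
          (ampMatrix f ψ * (ampMatrix f ψ)ᴴ - pinching f (ampMatrix f ψ * (ampMatrix f ψ)ᴴ)))
        (controlledShift f) (controlledShift f) := by
  ext ⟨a, s⟩ ⟨a', s'⟩
  simp only [Matrix.sub_apply, cqMarginalX_apply hψ, idealKey, of_apply, reducedR_eq_pinching hψ,
    submatrix_apply, kroneckerMap_apply, controlledShift, Equiv.coe_fn_mk, Matrix.smul_apply,
    one_apply, smul_eq_mul, mul_ite, mul_one, pinching_apply]
  by_cases h : f s = f s'
  · simp only [h, sub_left_inj, if_true, mul_sub, mul_zero]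
  · simp only [if_neg h, mul_zero, sub_zero]

theorem two_mul_pSecure [DecidableEq β] [NeZero d] (hψ : ∀ a b s, a ≠ f s → ψ (a, b, s) = 0) :
    2 * pSecure ψ = traceNorm
      (ampMatrix f ψ * (ampMatrix f ψ)ᴴ - pinching f (ampMatrix f ψ * (ampMatrix f ψ)ᴴ)) := by
  have hmixed : traceNorm ((d : ℂ)⁻¹ • (1 : Matrix (Fin d) (Fin d) ℂ)) = 1 := by
    have h : 0 ≤ (d : ℂ)⁻¹ • (1 : Matrix (Fin d) (Fin d) ℂ) :=
      (PosSemidef.one.smul (by positivity)).nonneg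
    have hd : (d : ℂ) ≠ 0 := NeZero.ne _
    have := coe_traceNorm_of_nonneg h
    rw [trace_smul, trace_one, Fintype.card_fin, smul_eq_mul, inv_mul_cancel₀ hd] at this
    exact_mod_cast this
  rw [pSecure, traceDist, mul_div_cancel₀ _ two_ne_zero, cqMarginalX_sub_idealKey hψ,
    traceNorm_submatrix_equiv, traceNorm_kronecker, hmixed, one_mul]

theorem pGuess_eq_sum_trace (hψ : ∀ a b s, a ≠ f s → ψ (a, b, s) = 0)
    (Λ : Fin d → Matrix β β ℂ) :
    pGuess ψ Λ =
      ∑ z, (blockProj f z * (ampMatrix f ψ * (Λ z)ᵀ * (ampMatrix f ψ)ᴴ)).trace.re := by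
  rw [pGuess, Complex.re_sum]
  refine Finset.sum_congr rfl fun z _ => congrArg Complex.re ?_
  calc ∑ b, ∑ b', ∑ s, (starRingEnd ℂ) (ψ (z, b, s)) * Λ z b b' * ψ (z, b', s)
      = ∑ s, ∑ b, ∑ b', (starRingEnd ℂ) (ψ (z, b, s)) * Λ z b b' * ψ (z, b', s) :=
        (Finset.sum_congr rfl fun _ _ => Finset.sum_comm).trans Finset.sum_comm
    _ = (blockProj f z * (ampMatrix f ψ * (Λ z)ᵀ * (ampMatrix f ψ)ᴴ)).trace := by
        rw [trace_blockProj_mul]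
        refine Finset.sum_congr rfl fun s _ => ?_
        split_ifs with h
        · simp only [← h, Matrix.mul_apply, Finset.sum_mul, ampMatrix, of_apply, transpose_apply,
            conjTranspose_apply, starRingEnd_apply]
          exact Finset.sum_congr rfl fun b _ => Finset.sum_congr rfl fun b' _ => by ring
        · simp only [hψ z _ s (Ne.symm h), mul_zero, Finset.sum_const_zero]

theorem secure_implies_recoverable_caseB_general [DecidableEq β] [NeZero d]
    (hψ : ∀ a b s, a ≠ f s → ψ (a, b, s) = 0) :
    ∃ Λ : Fin d → Matrix β β ℂ, IsPOVM Λ ∧ ∑ t, ‖ψ t‖ ^ 2 - 2 * pSecure ψ ≤ pGuess ψ Λ := by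
  obtain ⟨Λ, hΛ, hguess⟩ := exists_isPOVM_pinching_sqrt_le f (ampMatrix f ψ)
  refine ⟨fun z => (Λ z)ᵀ, hΛ.transpose, ?_⟩
  simp only [pGuess_eq_sum_trace hψ, transpose_transpose, two_mul_pSecure hψ,
    ← trace_ampMatrix_mul_conjTranspose hψ]
  exact (re_trace_sub_traceNorm_sub_pinching_le f
    (posSemidef_self_mul_conjTranspose _).nonneg).trans hguess

end Security

theorem sum_norm_sq_eq_one_of_form {α β r₂ : Type*} [Fintype α] [DecidableEq α] [Fintype β]
    [Fintype r₂] {p : α → ℝ} (hp0 : ∀ z, 0 ≤ p z) (hp1 : ∑ z, p z = 1) {φ : α → β × r₂ → ℂ}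
    (hφ : ∀ z, ∑ t, ‖φ z t‖ ^ 2 = 1) {ψ : α × β × (α × r₂) → ℂ}
    (hform : ∀ a b k s, ψ (a, b, (k, s)) =
      (Real.sqrt (p a) : ℂ) * (if k = a then 1 else 0) * φ a (b, s)) :
    ∑ t, ‖ψ t‖ ^ 2 = 1 := by
  have hentry (a : α) (b : β) (k : α) (s : r₂) :
      ‖ψ (a, b, (k, s))‖ ^ 2 = if k = a then p a * ‖φ a (b, s)‖ ^ 2 else 0 := by
    rw [hform]
    split_ifs
    · rw [mul_one, norm_mul, Complex.norm_real, Real.norm_of_nonneg (Real.sqrt_nonneg _), mul_pow,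
        Real.sq_sqrt (hp0 a)]
    · rw [mul_zero, zero_mul, norm_zero, zero_pow two_ne_zero]
  have hmarg (a : α) (b : β) : ∑ k, ∑ s, ‖ψ (a, b, (k, s))‖ ^ 2 = p a * ∑ s, ‖φ a (b, s)‖ ^ 2 := by
    rw [Finset.sum_comm]
    simp only [hentry, Finset.sum_ite_eq', Finset.mem_univ, if_true, Finset.mul_sum]
  simp only [Fintype.sum_prod_type] at hφ ⊢
  simp only [hmarg, ← Finset.mul_sum, hφ, mul_one, hp1]

theorem one_sub_sqrt_le_max {x : ℝ} (hx : 0 ≤ x) : 1 - Real.sqrt x ≤ max 0 (1 - x) := by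
  rcases le_total 1 (Real.sqrt x) with h | h
  · exact le_max_of_le_left (sub_nonpos.2 h)
  · refine le_max_of_le_right (sub_le_sub_left ?_ 1)
    calc x = Real.sqrt x * Real.sqrt x := (Real.mul_self_sqrt hx).symm
      _ ≤ Real.sqrt x := mul_le_of_le_one_left (Real.sqrt_nonneg x) h

/-- If H(Z^A|R)=0 (the state has the form ∑_z √p_z |z⟩_A ⊗ |φ_z⟩_{BR₂} ⊗ |z⟩_{R₁},
suitably reordered) and X^A is ε-secure against R = R₁R₂, then Z^A is √(2ε)-recoverable from B. -/
theorem secure_implies_recoverable_caseB {d : ℕ} (hd : 1 ≤ d)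
    {β r₂ : Type*} [Fintype β] [DecidableEq β] [Fintype r₂] [DecidableEq r₂]
    (p : Fin d → ℝ) (hp0 : ∀ z, 0 ≤ p z) (hp1 : ∑ z, p z = 1)
    (φ : Fin d → β × r₂ → ℂ) (hφ : ∀ z, ∑ t, ‖φ z t‖ ^ 2 = 1)
    (ψ : Fin d × β × (Fin d × r₂) → ℂ)
    (hform : ∀ a b k s, ψ (a, b, (k, s))
        = (Real.sqrt (p a) : ℂ) * (if k = a then 1 else 0) * φ a (b, s))
    (ε : ℝ) (hε0 : 0 ≤ ε)
    (hsec : pSecure ψ ≤ ε) :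
    ∃ Λ : Fin d → Matrix β β ℂ,
      (∀ z, (Λ z).PosSemidef) ∧ (∑ z, Λ z = 1) ∧
      1 - Real.sqrt (2 * ε) ≤ pGuess ψ Λ := by
  have : NeZero d := ⟨by omega⟩
  have hψ (a : Fin d) (b : β) (t : Fin d × r₂) (h : a ≠ t.1) : ψ (a, b, t) = 0 := by
    rw [← Prod.mk.eta (p := t), hform, if_neg h.symm, mul_zero, zero_mul]
  obtain ⟨Λ, hΛ, hguess⟩ := secure_implies_recoverable_caseB_general hψ
  rw [sum_norm_sq_eq_one_of_form hp0 hp1 hφ hform] at hguess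
  refine ⟨Λ, hΛ.posSemidef, hΛ.sum_eq_one, ?_⟩
  calc 1 - Real.sqrt (2 * ε) ≤ max 0 (1 - 2 * ε) := one_sub_sqrt_le_max (by positivity)
    _ ≤ pGuess ψ Λ := max_le (pGuess_nonneg hΛ.posSemidef) (by linarith)
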